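/- Let d ≥ 1, N ≥ 1, and let A₀, …, A_{N−1} ∈ GL(d,ℝ) be an irreducible tuple of invertible matrices with joint spectral radius ρ. Then there exists a norm |||·||| on ℝ^d such that max_{0≤i≤N−1} |||A_i u||| = ρ·|||u||| for every u ∈ ℝ^d. (Barabanov's theorem; the one-step specialization of Theorem 5.4 of the paper on Barabanov norms for cocycles over shifts.) -/

import Mathlib

/-- Euclidean operator norm of a `d × d` real matrix. -/
noncomputable def matNorm {d : ℕ} (A : Matrix (Fin d) (Fin d) ℝ) : ℝ :=
  ‖LinearMap.toContinuousLinearMap (Matrix.toEuclideanLin A)‖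

/-- Cocycle products: `cocycle T F n x = F(T^{n-1}x) ⬝ ⋯ ⬝ F(Tx) ⬝ F(x)`. -/
def cocycle {X : Type*} (T : X → X) {d : ℕ} (F : X → Matrix (Fin d) (Fin d) ℝ) :
    ℕ → X → Matrix (Fin d) (Fin d) ℝ
  | 0, _ => 1
  | n + 1, x => cocycle T F n (T x) * F x

/-!
For `r` beyond the joint spectral radius `ρ`, weight the seminorms
`pₙ v = max ‖T (w 0) ⋯ T (w (n - 1)) v‖` by `(n + 1) r⁻ⁿ` and take their supremum `q_r`.
Since `pₙ₊₁ v = maxᵢ pₙ (T i v)`, passing from `v` to the vectors `T i v` only shifts the index,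
so `maxᵢ q_r (T i v) ≤ r q_r v`, and the reverse inequality holds up to a factor close to `1`
and a term that stays bounded as `r ↓ ρ`. Because `ρⁿ ≤ max ‖T (w 0) ⋯ T (w (n - 1))‖`, the
weights `n + 1` make `q_r` blow up, so the bounded term disappears in any limit `Q` of the
normalised seminorms: `maxᵢ Q (T i v) = ρ Q v`. The kernel of `Q` is invariant, and irreducibility
makes it trivial.
-/

open Filter Topology
open scoped NNReal

lemma tendsto_ciSup_of_finite {ι α : Type*} [Finite ι] [Nonempty ι] {l : Filter α}
    {f : α → ι → ℝ} {g : ι → ℝ} (h : ∀ i, Tendsto (fun a => f a i) l (𝓝 (g i))) :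
    Tendsto (fun a => ⨆ i, f a i) l (𝓝 (⨆ i, g i)) := by
  have := Fintype.ofFinite ι
  simp only [← Finset.sup'_univ_eq_ciSup]
  exact Filter.Tendsto.finset_sup'_nhds_apply Finset.univ_nonempty fun i _ => h i

section Words

variable {ι R : Type*}

/-- The product `T (w 0) * ⋯ * T (w (n - 1))` along a word `w` of length `n`. -/
def wordProd [Monoid R] (T : ι → R) {n : ℕ} (w : Fin n → ι) : R :=
  (List.ofFn fun k => T (w k)).prod

lemma wordProd_append [Monoid R] (T : ι → R) {m n : ℕ} (u : Fin m → ι) (w : Fin n → ι) :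
    wordProd T (Fin.append u w) = wordProd T u * wordProd T w := by
  have hcomp : (fun k => T (Fin.append u w k)) =
      Fin.append (fun k => T (u k)) (fun k => T (w k)) := by
    ext k
    refine Fin.addCases (fun i => ?_) (fun i => ?_) k <;> simp
  rw [wordProd, hcomp, List.ofFn_fin_append, List.prod_append, wordProd, wordProd]

lemma wordProd_snoc [Monoid R] (T : ι → R) {n : ℕ} (w : Fin n → ι) (i : ι) :
    wordProd T (Fin.snoc w i : Fin (n + 1) → ι) = wordProd T w * T i := by
  rw [← Fin.append_right_eq_snoc w fun _ => i, wordProd_append]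
  simp [wordProd]

lemma map_wordProd {S F : Type*} [Monoid R] [Monoid S] [FunLike F R S] [MonoidHomClass F R S]
    (f : F) (T : ι → R) {n : ℕ} (w : Fin n → ι) :
    f (wordProd T w) = wordProd (fun i => f (T i)) w := by
  simp only [wordProd, map_list_prod, List.map_ofFn, Function.comp_def]

/-- The largest norm of a product of `n` entries of the tuple `T`. -/
noncomputable def maxWordNorm [SeminormedRing R] (T : ι → R) (n : ℕ) : ℝ :=
  ⨆ w : Fin n → ι, ‖wordProd T w‖

/-- `ρ` is the joint spectral radius of the tuple `T`: the limit of the `n`-th roots of the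
largest norms of products of length `n`. -/
def IsJointSpectralRadius [SeminormedRing R] (T : ι → R) (ρ : ℝ) : Prop :=
  Tendsto (fun n : ℕ => maxWordNorm T n ^ ((1 : ℝ) / n)) atTop (𝓝 ρ)

variable [SeminormedRing R] {T : ι → R} {ρ r : ℝ}

lemma maxWordNorm_nonneg (T : ι → R) (n : ℕ) : 0 ≤ maxWordNorm T n :=
  Real.iSup_nonneg fun _ => norm_nonneg _

lemma norm_wordProd_le_maxWordNorm [Finite ι] (T : ι → R) {n : ℕ} (w : Fin n → ι) :
    ‖wordProd T w‖ ≤ maxWordNorm T n :=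
  le_ciSup (f := fun w : Fin n → ι => ‖wordProd T w‖) (Set.finite_range _).bddAbove w

lemma maxWordNorm_add_le [Finite ι] (T : ι → R) (m n : ℕ) :
    maxWordNorm T (m + n) ≤ maxWordNorm T m * maxWordNorm T n := by
  refine Real.iSup_le (fun w => ?_)
    (mul_nonneg (maxWordNorm_nonneg T m) (maxWordNorm_nonneg T n))
  rw [← Fin.append_castAdd_natAdd (f := w), wordProd_append]
  exact (norm_mul_le _ _).trans (mul_le_mul (norm_wordProd_le_maxWordNorm T _)
    (norm_wordProd_le_maxWordNorm T _) (norm_nonneg _) (maxWordNorm_nonneg T m))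

lemma maxWordNorm_mul_succ_le [Finite ι] (T : ι → R) (n k : ℕ) :
    maxWordNorm T (n * (k + 1)) ≤ maxWordNorm T n ^ (k + 1) := by
  induction k with
  | zero => simp
  | succ k ih =>
    rw [mul_add_one, pow_succ]
    exact (maxWordNorm_add_le T _ _).trans
      (mul_le_mul_of_nonneg_right ih (maxWordNorm_nonneg T n))

namespace IsJointSpectralRadius

lemma nonneg (hT : IsJointSpectralRadius T ρ) : 0 ≤ ρ :=
  ge_of_tendsto' hT fun n => Real.rpow_nonneg (maxWordNorm_nonneg T n) _

lemma pow_le_maxWordNorm [Finite ι] (hT : IsJointSpectralRadius T ρ) {n : ℕ} (hn : n ≠ 0) :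
    ρ ^ n ≤ maxWordNorm T n := by
  have hS := maxWordNorm_nonneg T
  have hsub : Tendsto (fun k : ℕ => n * (k + 1)) atTop atTop :=
    (tendsto_add_atTop_nat 1).const_mul_atTop' (Nat.pos_of_ne_zero hn)
  have hroot : ρ ≤ maxWordNorm T n ^ ((n : ℝ)⁻¹) := by
    refine le_of_tendsto' (hT.comp hsub) fun k => ?_
    calc maxWordNorm T (n * (k + 1)) ^ ((1 : ℝ) / (n * (k + 1) : ℕ))
        ≤ (maxWordNorm T n ^ (k + 1)) ^ ((1 : ℝ) / (n * (k + 1) : ℕ)) :=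
          Real.rpow_le_rpow (hS _) (maxWordNorm_mul_succ_le T n k) (by positivity)
      _ = maxWordNorm T n ^ ((n : ℝ)⁻¹) := by
          rw [← Real.rpow_natCast, ← Real.rpow_mul (hS n)]
          congr 1
          push_cast
          field_simp
  calc ρ ^ n ≤ (maxWordNorm T n ^ ((n : ℝ)⁻¹)) ^ n := pow_le_pow_left₀ hT.nonneg hroot n
    _ = maxWordNorm T n := Real.rpow_inv_natCast_pow (hS n) hn

lemma eventually_maxWordNorm_le_pow (hT : IsJointSpectralRadius T ρ) (hr : ρ < r) :
    ∀ᶠ n in atTop, maxWordNorm T n ≤ r ^ n := by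
  filter_upwards [hT.eventually_lt_const hr, eventually_ne_atTop 0] with n hlt hn
  rw [one_div] at hlt
  have hS := maxWordNorm_nonneg T n
  calc maxWordNorm T n = (maxWordNorm T n ^ ((n : ℝ)⁻¹)) ^ n :=
        (Real.rpow_inv_natCast_pow hS hn).symm
    _ ≤ r ^ n := pow_le_pow_left₀ (Real.rpow_nonneg hS _) hlt.le n

end IsJointSpectralRadius

end Words

section BasisSum

variable {𝕜 E κ : Type*} [NontriviallyNormedField 𝕜] [NormedAddCommGroup E] [NormedSpace 𝕜 E]
  [Fintype κ]

/-- The sum of the values of a seminorm on a basis, a norm on the cone of seminorms of a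
finite-dimensional space. -/
noncomputable def basisSum (b : Module.Basis κ 𝕜 E) (q : Seminorm 𝕜 E) : ℝ :=
  ∑ j, q (b j)

lemma basisSum_nonneg (b : Module.Basis κ 𝕜 E) (q : Seminorm 𝕜 E) : 0 ≤ basisSum b q :=
  Finset.sum_nonneg fun _ _ => apply_nonneg q _

lemma basisSum_pos [Nontrivial E] (b : Module.Basis κ 𝕜 E) {q : Seminorm 𝕜 E}
    (hq : ∀ v, ‖v‖ ≤ q v) : 0 < basisSum b q := by
  have := b.index_nonempty
  exact Finset.sum_pos (fun j _ => (norm_pos_iff.mpr (b.ne_zero j)).trans_le (hq _))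
    Finset.univ_nonempty

variable [CompleteSpace 𝕜]

lemma exists_forall_seminorm_le_basisSum (b : Module.Basis κ 𝕜 E) :
    ∃ C > 0, ∀ (q : Seminorm 𝕜 E) v, q v ≤ C * basisSum b q * ‖v‖ := by
  refine ⟨‖b.equivFunL.toContinuousLinearMap‖ + 1, by positivity, fun q v => ?_⟩
  have hcoord (j : κ) : ‖b.repr v j‖ ≤ (‖b.equivFunL.toContinuousLinearMap‖ + 1) * ‖v‖ :=
    (norm_le_pi_norm (b.equivFunL v) j).trans
      ((b.equivFunL.toContinuousLinearMap.le_opNorm v).trans (by gcongr; simp))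
  calc q v = q (∑ j, b.repr v j • b j) := by rw [b.sum_repr]
    _ ≤ ∑ j, q (b.repr v j • b j) :=
        Finset.le_sum_of_subadditive _ (map_zero q).le (map_add_le_add q) _ _
    _ ≤ ∑ j, (‖b.equivFunL.toContinuousLinearMap‖ + 1) * ‖v‖ * q (b j) :=
        Finset.sum_le_sum fun j _ => by rw [map_smul_eq_mul]; gcongr; exact hcoord j
    _ = _ := by rw [← Finset.mul_sum, basisSum]; ring

lemma exists_tendsto_div_basisSum {α : Type*} (b : Module.Basis κ 𝕜 E) (U : Ultrafilter α)
    {q : α → Seminorm 𝕜 E} (hq : ∀ᶠ a in U, 0 < basisSum b (q a)) :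
    ∃ Q : Seminorm 𝕜 E, basisSum b Q = 1 ∧
      ∀ v, Tendsto (fun a => q a v / basisSum b (q a)) U (𝓝 (Q v)) := by
  obtain ⟨C, -, hC⟩ := exists_forall_seminorm_le_basisSum b
  have hmem (v : E) : ∀ᶠ a in U, q a v / basisSum b (q a) ∈ Set.Icc 0 (C * ‖v‖) := by
    filter_upwards [hq] with a ha
    refine ⟨div_nonneg (apply_nonneg _ _) ha.le, (div_le_iff₀ ha).mpr ?_⟩
    linarith [hC (q a) v]
  choose f _ hf using fun v => isCompact_Icc.ultrafilter_le_nhds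
    (U.map fun a => q a v / basisSum b (q a)) (le_principal_iff.mpr (hmem v))
  have hlim (v : E) : Tendsto (fun a => q a v / basisSum b (q a)) U (𝓝 (f v)) := hf v
  refine ⟨Seminorm.of f (fun u v => ?_) fun c v => ?_, ?_, hlim⟩
  · refine le_of_tendsto_of_tendsto' (hlim _) ((hlim u).add (hlim v)) fun a => ?_
    rw [← add_div]
    exact div_le_div_of_nonneg_right (map_add_le_add _ _ _) (basisSum_nonneg b _)
  · refine tendsto_nhds_unique (hlim _) (((hlim v).const_mul ‖c‖).congr fun a => ?_)
    rw [map_smul_eq_mul, mul_div_assoc]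
  · refine tendsto_nhds_unique (tendsto_finsetSum _ fun j _ => hlim (b j)) ?_
    refine tendsto_const_nhds.congr' (hq.mono fun a ha => ?_)
    simp only [← Finset.sum_div]
    exact (div_self ha.ne').symm

end BasisSum

section OrbitSeminorm

variable {𝕜 E ι : Type*} [NontriviallyNormedField 𝕜] [NormedAddCommGroup E] [NormedSpace 𝕜 E]

/-- The seminorm `v ↦ max ‖T (w 0) ⋯ T (w (n - 1)) v‖` over the words `w` of length `n`. -/
noncomputable def orbitSeminorm (T : ι → E →L[𝕜] E) (n : ℕ) : Seminorm 𝕜 E :=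
  ⨆ w : Fin n → ι, (normSeminorm 𝕜 E).comp (wordProd T w).toLinearMap

variable [Finite ι] (T : ι → E →L[𝕜] E)

lemma orbitSeminorm_apply (n : ℕ) (v : E) :
    orbitSeminorm T n v = ⨆ w : Fin n → ι, ‖wordProd T w v‖ :=
  Seminorm.iSup_apply (Set.finite_range _).bddAbove

lemma norm_wordProd_apply_le_orbitSeminorm {n : ℕ} (w : Fin n → ι) (v : E) :
    ‖wordProd T w v‖ ≤ orbitSeminorm T n v := by
  rw [orbitSeminorm_apply]
  exact le_ciSup (f := fun w : Fin n → ι => ‖wordProd T w v‖) (Set.finite_range _).bddAbove w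

lemma orbitSeminorm_zero (v : E) : orbitSeminorm T 0 v = ‖v‖ := by
  rw [orbitSeminorm_apply, ciSup_unique]
  simp [wordProd]

lemma orbitSeminorm_apply_le_succ (n : ℕ) (i : ι) (v : E) :
    orbitSeminorm T n (T i v) ≤ orbitSeminorm T (n + 1) v := by
  rw [orbitSeminorm_apply]
  refine Real.iSup_le (fun w => ?_) (apply_nonneg _ _)
  rw [← mul_apply_eq_comp, ← wordProd_snoc]
  exact norm_wordProd_apply_le_orbitSeminorm T _ v

lemma exists_orbitSeminorm_succ_eq [Nonempty ι] (n : ℕ) (v : E) :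
    ∃ i, orbitSeminorm T (n + 1) v = orbitSeminorm T n (T i v) := by
  obtain ⟨w, hw⟩ := exists_eq_ciSup_of_finite (f := fun w : Fin (n + 1) → ι => ‖wordProd T w v‖)
  refine ⟨w (Fin.last n), (orbitSeminorm_apply_le_succ T n _ v).antisymm' ?_⟩
  rw [orbitSeminorm_apply, ← hw, ← Fin.snoc_init_self w, wordProd_snoc]
  simpa using norm_wordProd_apply_le_orbitSeminorm T (Fin.init w) (T (w (Fin.last n)) v)

lemma orbitSeminorm_le_maxWordNorm (n : ℕ) (v : E) :
    orbitSeminorm T n v ≤ maxWordNorm T n * ‖v‖ := by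
  rw [orbitSeminorm_apply]
  exact Real.iSup_le (fun w => (wordProd T w).le_of_opNorm_le (norm_wordProd_le_maxWordNorm T w) v)
    (mul_nonneg (maxWordNorm_nonneg T n) (norm_nonneg v))

variable {T} in
lemma maxWordNorm_le_of_orbitSeminorm_le {n : ℕ} {C : ℝ} (hC : 0 ≤ C)
    (h : ∀ v, orbitSeminorm T n v ≤ C * ‖v‖) : maxWordNorm T n ≤ C :=
  Real.iSup_le (fun w => (wordProd T w).opNorm_le_bound hC fun v =>
    (norm_wordProd_apply_le_orbitSeminorm T w v).trans (h v)) hC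

end OrbitSeminorm

section ResolventSeminorm

variable {𝕜 E ι : Type*} [NontriviallyNormedField 𝕜] [NormedAddCommGroup E] [NormedSpace 𝕜 E]

/-- The supremum over `n` of `(n + 1) r⁻ⁿ` times the `n`-th orbit seminorm. It is finite for `r`
beyond the joint spectral radius; otherwise `⨆` may be the junk value `0`. -/
noncomputable def resolventSeminorm (T : ι → E →L[𝕜] E) (r : ℝ≥0) : Seminorm 𝕜 E :=
  ⨆ n : ℕ, ((n + 1) * r⁻¹ ^ n : ℝ≥0) • orbitSeminorm T n

variable [Finite ι] {T : ι → E →L[𝕜] E} {ρ r : ℝ≥0}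

namespace IsJointSpectralRadius

lemma bddAbove_resolvent (hT : IsJointSpectralRadius T ρ) (hr : ρ < r) (v : E) :
    BddAbove (Set.range fun n : ℕ => (n + 1) * (r : ℝ)⁻¹ ^ n * orbitSeminorm T n v) := by
  obtain ⟨s, hρs, hsr⟩ := exists_between hr
  have hlim : Tendsto (fun n : ℕ => (n + 1) * ((s : ℝ) / r) ^ n * ‖v‖) atTop (𝓝 0) := by
    have hlt : (s : ℝ) / r < 1 := (div_lt_one (NNReal.coe_pos.mpr (pos_of_gt hr))).mpr hsr
    have hpos : 0 ≤ (s : ℝ) / r := by positivity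
    simpa [add_mul] using ((tendsto_self_mul_const_pow_of_lt_one hpos hlt).add
      (tendsto_pow_atTop_nhds_zero_of_lt_one hpos hlt)).mul_const ‖v‖
  obtain ⟨B, hB⟩ := hlim.isBoundedUnder_le
  refine Filter.IsBoundedUnder.bddAbove_range ⟨B, eventually_map.mpr ?_⟩
  filter_upwards [eventually_map.mp hB, hT.eventually_maxWordNorm_le_pow hρs] with n hn hS
  calc (n + 1) * (r : ℝ)⁻¹ ^ n * orbitSeminorm T n v
      ≤ (n + 1) * (r : ℝ)⁻¹ ^ n * (s ^ n * ‖v‖) := by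
        gcongr
        exact (orbitSeminorm_le_maxWordNorm T n v).trans
          (mul_le_mul_of_nonneg_right hS (norm_nonneg v))
    _ = (n + 1) * ((s : ℝ) / r) ^ n * ‖v‖ := by rw [div_eq_mul_inv, mul_pow]; ring
    _ ≤ B := hn

lemma isLUB_resolventSeminorm (hT : IsJointSpectralRadius T ρ) (hr : ρ < r) (v : E) :
    IsLUB (Set.range fun n : ℕ => (n + 1) * (r : ℝ)⁻¹ ^ n * orbitSeminorm T n v)
      (resolventSeminorm T r v) := by
  have hterm (n : ℕ) (u : E) : (((n + 1) * r⁻¹ ^ n : ℝ≥0) • orbitSeminorm T n) u =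
      (n + 1) * (r : ℝ)⁻¹ ^ n * orbitSeminorm T n u := by
    simp [NNReal.smul_def]
  have hbdd : BddAbove (Set.range fun n : ℕ =>
      ((n + 1) * r⁻¹ ^ n : ℝ≥0) • orbitSeminorm T n) := by
    refine Seminorm.bddAbove_range_iff.mpr fun u => ?_
    simpa only [hterm] using hT.bddAbove_resolvent hr u
  rw [resolventSeminorm, Seminorm.iSup_apply hbdd]
  simp only [hterm]
  exact isLUB_ciSup (hT.bddAbove_resolvent hr v)

lemma orbitSeminorm_le_resolventSeminorm (hT : IsJointSpectralRadius T ρ) (hr : ρ < r) (n : ℕ)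
    (v : E) : (n + 1) * (r : ℝ)⁻¹ ^ n * orbitSeminorm T n v ≤ resolventSeminorm T r v :=
  (hT.isLUB_resolventSeminorm hr v).1 ⟨n, rfl⟩

lemma norm_le_resolventSeminorm (hT : IsJointSpectralRadius T ρ) (hr : ρ < r) (v : E) :
    ‖v‖ ≤ resolventSeminorm T r v := by
  simpa [orbitSeminorm_zero] using hT.orbitSeminorm_le_resolventSeminorm hr 0 v

lemma resolventSeminorm_apply_le (hT : IsJointSpectralRadius T ρ) (hr : ρ < r) (i : ι) (v : E) :
    resolventSeminorm T r (T i v) ≤ r * resolventSeminorm T r v := by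
  refine (hT.isLUB_resolventSeminorm hr (T i v)).2 ?_
  rintro _ ⟨n, rfl⟩
  have hr0 : (r : ℝ) ≠ 0 := by exact_mod_cast (pos_of_gt hr).ne'
  calc (n + 1) * (r : ℝ)⁻¹ ^ n * orbitSeminorm T n (T i v)
      ≤ (↑(n + 1) + 1) * (r : ℝ)⁻¹ ^ n * orbitSeminorm T (n + 1) v := by
        have := orbitSeminorm_apply_le_succ T n i v
        gcongr
        simp
    _ = r * ((↑(n + 1) + 1) * (r : ℝ)⁻¹ ^ (n + 1) * orbitSeminorm T (n + 1) v) := by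
        rw [pow_succ]; field_simp
    _ ≤ r * resolventSeminorm T r v := by
        gcongr
        exact hT.orbitSeminorm_le_resolventSeminorm hr (n + 1) v

/-- The weights `n + 1` grow by at most the factor `1 + 1 / (K + 1)` per step once `n ≥ K`. -/
lemma exists_resolventSeminorm_le [Nonempty ι] (hT : IsJointSpectralRadius T ρ) (hρ : 0 < ρ)
    (K : ℕ) (v : E) :
    ∃ C, ∀ r > ρ, resolventSeminorm T r v ≤
      C + (1 + 1 / ((K : ℝ) + 1)) * (r : ℝ)⁻¹ * ⨆ i, resolventSeminorm T r (T i v) := by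
  refine ⟨∑ n ∈ Finset.range (K + 1), (n + 1) * (ρ : ℝ)⁻¹ ^ n * orbitSeminorm T n v,
    fun r hr => (hT.isLUB_resolventSeminorm hr v).2 ?_⟩
  have hsup : 0 ≤ ⨆ i, resolventSeminorm T r (T i v) := Real.iSup_nonneg fun _ => apply_nonneg _ _
  rintro _ ⟨n, rfl⟩
  obtain hn | ⟨m, rfl, hm⟩ : n < K + 1 ∨ ∃ m, n = m + 1 ∧ K ≤ m :=
    (lt_or_ge n (K + 1)).imp_right fun h => ⟨n - 1, by omega, by omega⟩
  · refine le_add_of_le_of_nonneg ?_ (by positivity)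
    calc (n + 1) * (r : ℝ)⁻¹ ^ n * orbitSeminorm T n v
        ≤ (n + 1) * (ρ : ℝ)⁻¹ ^ n * orbitSeminorm T n v := by gcongr
      _ ≤ _ := Finset.single_le_sum
          (f := fun n : ℕ => (n + 1) * (ρ : ℝ)⁻¹ ^ n * orbitSeminorm T n v)
          (fun _ _ => by positivity) (Finset.mem_range.mpr hn)
  · refine le_add_of_nonneg_of_le (Finset.sum_nonneg fun _ _ => by positivity) ?_
    obtain ⟨i, hi⟩ := exists_orbitSeminorm_succ_eq T m v
    have hweight : ((m + 1 : ℕ) : ℝ) + 1 ≤ (1 + 1 / ((K : ℝ) + 1)) * (m + 1) := by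
      have : (1 : ℝ) ≤ (m + 1) / (K + 1) := (one_le_div (by positivity)).mpr (by gcongr)
      push_cast
      linarith [show (1 + 1 / ((K : ℝ) + 1)) * (m + 1) = m + 1 + (m + 1) / (K + 1) by ring]
    calc (↑(m + 1) + 1) * (r : ℝ)⁻¹ ^ (m + 1) * orbitSeminorm T (m + 1) v
        ≤ ((1 + 1 / ((K : ℝ) + 1)) * (m + 1)) * (r : ℝ)⁻¹ ^ (m + 1) *
            orbitSeminorm T m (T i v) := by rw [hi]; gcongr
      _ = (1 + 1 / ((K : ℝ) + 1)) * (r : ℝ)⁻¹ *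
            ((m + 1) * (r : ℝ)⁻¹ ^ m * orbitSeminorm T m (T i v)) := by ring
      _ ≤ _ := by
        gcongr
        exact (hT.orbitSeminorm_le_resolventSeminorm hr m _).trans
          (le_ciSup (f := fun i => resolventSeminorm T r (T i v)) (Set.finite_range _).bddAbove i)

variable {κ : Type*} [Fintype κ] {b : Module.Basis κ 𝕜 E} {l : Filter ℝ≥0} [l.NeBot]
  {Q : E → ℝ}

lemma limit_apply_le (hT : IsJointSpectralRadius T ρ) (hl : l ≤ 𝓝[>] ρ)
    (hQ : ∀ v, Tendsto (fun r => resolventSeminorm T r v / basisSum b (resolventSeminorm T r)) l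
      (𝓝 (Q v))) (i : ι) (v : E) : Q (T i v) ≤ ρ * Q v := by
  refine le_of_tendsto_of_tendsto (hQ (T i v))
    (((NNReal.tendsto_coe.mpr tendsto_id).mono_left (hl.trans nhdsWithin_le_nhds)).mul (hQ v)) ?_
  filter_upwards [hl self_mem_nhdsWithin] with r hr
  rw [id, ← mul_div_assoc]
  exact div_le_div_of_nonneg_right (hT.resolventSeminorm_apply_le hr i v) (basisSum_nonneg b _)

variable [CompleteSpace 𝕜]

/-- This is what the weights `n + 1` are for: `ρⁿ ≤ maxWordNorm T n` alone does not make the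
unweighted seminorms `⨆ n, r⁻ⁿ • orbitSeminorm T n` unbounded. -/
lemma tendsto_basisSum_resolventSeminorm (hT : IsJointSpectralRadius T ρ) (hρ : 0 < ρ)
    (b : Module.Basis κ 𝕜 E) :
    Tendsto (fun r => basisSum b (resolventSeminorm T r)) (𝓝[>] ρ) atTop := by
  obtain ⟨C, hC, hle⟩ := exists_forall_seminorm_le_basisSum b
  refine tendsto_atTop.mpr fun B => ?_
  obtain ⟨n, hn0, hn⟩ : ∃ n : ℕ, n ≠ 0 ∧ B * C < n + 1 := by
    obtain ⟨n, hn⟩ := exists_nat_gt (B * C)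
    exact ⟨n + 1, n.succ_ne_zero, hn.trans (by push_cast; linarith)⟩
  have hpow : (ρ : ℝ) ^ n / C ≤ basisSum b (orbitSeminorm T n) := by
    rw [div_le_iff₀' hC]
    exact (hT.pow_le_maxWordNorm hn0).trans (maxWordNorm_le_of_orbitSeminorm_le
      (mul_nonneg hC.le (basisSum_nonneg b _)) (hle _))
  have hlim : Tendsto (fun r : ℝ≥0 => (n + 1) * (r : ℝ)⁻¹ ^ n * ((ρ : ℝ) ^ n / C)) (𝓝[>] ρ)
      (𝓝 ((n + 1) * (ρ : ℝ)⁻¹ ^ n * ((ρ : ℝ) ^ n / C))) := by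
    have hρ' : (ρ : ℝ) ≠ 0 := by exact_mod_cast hρ.ne'
    have hcoe : Tendsto ((↑) : ℝ≥0 → ℝ) (𝓝[>] ρ) (𝓝 ρ) :=
      NNReal.continuous_coe.continuousWithinAt
    exact (((hcoe.inv₀ hρ').pow n).const_mul _).mul_const _
  have hB : B < (n + 1) * (ρ : ℝ)⁻¹ ^ n * ((ρ : ℝ) ^ n / C) := by
    rw [inv_pow]
    field_simp
    linarith
  filter_upwards [hlim.eventually_const_lt hB, self_mem_nhdsWithin] with r hlt hr
  calc B ≤ (n + 1) * (r : ℝ)⁻¹ ^ n * ((ρ : ℝ) ^ n / C) := hlt.le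
    _ ≤ (n + 1) * (r : ℝ)⁻¹ ^ n * basisSum b (orbitSeminorm T n) := by gcongr
    _ ≤ basisSum b (resolventSeminorm T r) := by
      rw [basisSum, Finset.mul_sum]
      exact Finset.sum_le_sum fun j _ => hT.orbitSeminorm_le_resolventSeminorm hr n _

lemma le_ciSup_limit [Nonempty ι] (hT : IsJointSpectralRadius T ρ) (hρ : 0 < ρ)
    (hl : l ≤ 𝓝[>] ρ)
    (hQ : ∀ v, Tendsto (fun r => resolventSeminorm T r v / basisSum b (resolventSeminorm T r)) l
      (𝓝 (Q v))) (v : E) : ρ * Q v ≤ ⨆ i, Q (T i v) := by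
  have hρ' : (0 : ℝ) < ρ := hρ
  have hcoe : Tendsto ((↑) : ℝ≥0 → ℝ) l (𝓝 ρ) :=
    (NNReal.tendsto_coe.mpr tendsto_id).mono_left (hl.trans nhdsWithin_le_nhds)
  have happrox (K : ℕ) : Q v ≤ (1 + 1 / ((K : ℝ) + 1)) * (ρ : ℝ)⁻¹ * ⨆ i, Q (T i v) := by
    obtain ⟨C, hC⟩ := hT.exists_resolventSeminorm_le hρ K v
    have hzero : Tendsto (fun r => C / basisSum b (resolventSeminorm T r)) l (𝓝 0) :=
      ((hT.tendsto_basisSum_resolventSeminorm hρ b).mono_left hl).const_div_atTop C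
    have hright := hzero.add (((hcoe.inv₀ hρ'.ne').const_mul (1 + 1 / ((K : ℝ) + 1))).mul
      (tendsto_ciSup_of_finite fun i => hQ (T i v)))
    rw [zero_add] at hright
    refine le_of_tendsto_of_tendsto (hQ v) hright ?_
    filter_upwards [hl self_mem_nhdsWithin] with r hr
    simp only [div_eq_mul_inv]
    rw [← Real.iSup_mul_of_nonneg (inv_nonneg.mpr (basisSum_nonneg b _)), ← mul_assoc, ← add_mul]
    exact mul_le_mul_of_nonneg_right (hC r hr) (inv_nonneg.mpr (basisSum_nonneg b _))
  rw [← le_inv_mul_iff₀ hρ']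
  have hweight : Tendsto (fun K : ℕ => 1 + 1 / ((K : ℝ) + 1)) atTop (𝓝 1) := by
    simpa using tendsto_one_div_add_atTop_nhds_zero_nat.const_add (1 : ℝ)
  simpa using ge_of_tendsto' ((hweight.mul_const (ρ : ℝ)⁻¹).mul_const (⨆ i, Q (T i v))) happrox

end IsJointSpectralRadius

end ResolventSeminorm

section Barabanov

variable {𝕜 E ι : Type*} [NontriviallyNormedField 𝕜] [NormedAddCommGroup E] [NormedSpace 𝕜 E]
  {T : ι → E →L[𝕜] E} {ρ : ℝ}

/-- The tuple `T` is irreducible: its only common invariant subspaces are the trivial ones. -/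
def IsIrreducibleTuple (T : ι → E →L[𝕜] E) : Prop :=
  ∀ V : Submodule 𝕜 E, (∀ i, ∀ v ∈ V, T i v ∈ V) → V = ⊥ ∨ V = ⊤

lemma IsIrreducibleTuple.seminorm_pos (hirr : IsIrreducibleTuple T) {Q : Seminorm 𝕜 E}
    (hQ : ∃ v, Q v ≠ 0) (hle : ∀ i v, Q (T i v) ≤ ρ * Q v) {v : E} (hv : v ≠ 0) : 0 < Q v := by
  let V : Submodule 𝕜 E :=
    { carrier := {v | Q v = 0}
      zero_mem' := map_zero Q
      add_mem' := fun {u v} (hu : Q u = 0) (hv : Q v = 0) =>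
        ((map_add_le_add Q u v).trans (by rw [hu, hv, add_zero])).antisymm (apply_nonneg Q _)
      smul_mem' := fun c v (hv : Q v = 0) =>
        (map_smul_eq_mul Q c v).trans (by rw [hv, mul_zero]) }
  have hinv : ∀ i, ∀ v ∈ V, T i v ∈ V := fun i v (hv : Q v = 0) =>
    ((hle i v).trans (by rw [hv, mul_zero])).antisymm (apply_nonneg Q _)
  rcases hirr V hinv with hbot | htop
  · refine (apply_nonneg Q v).lt_of_ne' fun h0 => hv ?_
    exact (Submodule.mem_bot 𝕜).mp (hbot ▸ (h0 : v ∈ V))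
  · obtain ⟨u, hu⟩ := hQ
    exact absurd (htop ▸ Submodule.mem_top : u ∈ V) hu

variable [CompleteSpace 𝕜] [FiniteDimensional 𝕜 E] [Nontrivial E] [Finite ι] [Nonempty ι]

theorem IsJointSpectralRadius.exists_eigenseminorm (hT : IsJointSpectralRadius T ρ) :
    ∃ Q : Seminorm 𝕜 E, (∃ v, Q v ≠ 0) ∧ ∀ v, ⨆ i, Q (T i v) = ρ * Q v := by
  lift ρ to ℝ≥0 using hT.nonneg
  let b := Module.finBasis 𝕜 E
  let U := Ultrafilter.of (𝓝[>] ρ)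
  have hU : ↑U ≤ 𝓝[>] ρ := Ultrafilter.of_le _
  have hpos : ∀ᶠ r in U, 0 < basisSum b (resolventSeminorm T r) := by
    filter_upwards [hU self_mem_nhdsWithin] with r hr
    exact basisSum_pos b (hT.norm_le_resolventSeminorm hr)
  obtain ⟨Q, hQb, hQ⟩ := exists_tendsto_div_basisSum b U hpos
  refine ⟨Q, ?_, fun v => (ciSup_le fun i => hT.limit_apply_le hU hQ i v).antisymm ?_⟩
  · by_contra! hzero
    simp [basisSum, hzero] at hQb
  · rcases eq_zero_or_pos ρ with rfl | hρ
    · simpa using Real.iSup_nonneg fun i => apply_nonneg Q (T i v)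
    · exact hT.le_ciSup_limit hρ hU hQ v

theorem barabanov_general (hirr : IsIrreducibleTuple T) (hT : IsJointSpectralRadius T ρ) :
    ∃ Q : Seminorm 𝕜 E, (∀ v, v ≠ 0 → 0 < Q v) ∧ ∀ v, ⨆ i, Q (T i v) = ρ * Q v := by
  obtain ⟨Q, hQ, hmax⟩ := hT.exists_eigenseminorm
  refine ⟨Q, fun v hv => hirr.seminorm_pos (ρ := ρ) hQ (fun i v => ?_) hv, hmax⟩
  rw [← hmax v]
  exact le_ciSup (f := fun i => Q (T i v)) (Set.finite_range _).bddAbove i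

end Barabanov

section Matrix

variable {d N : ℕ} (A : Fin N → Matrix (Fin d) (Fin d) ℝ)

lemma maxWordNorm_toEuclideanCLM (n : ℕ) :
    maxWordNorm (fun i => Matrix.toEuclideanCLM (𝕜 := ℝ) (A i)) n =
      sSup {r : ℝ | ∃ w : Fin n → Fin N, r = matNorm ((List.ofFn fun i => A (w i)).prod)} := by
  simp only [maxWordNorm, ← map_wordProd]
  refine congrArg sSup (Set.ext fun r => ?_)
  exact exists_congr fun w => eq_comm

variable {A}

lemma isIrreducibleTuple_toEuclideanCLM (hA : ∀ i, IsUnit (A i))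
    (hirr : ¬ ∃ V : Submodule ℝ (EuclideanSpace ℝ (Fin d)),
      0 < Module.finrank ℝ V ∧ Module.finrank ℝ V < d ∧
      ∀ i, V.map (Matrix.toEuclideanLin (A i)) = V) :
    IsIrreducibleTuple fun i => Matrix.toEuclideanCLM (𝕜 := ℝ) (A i) := by
  intro V hV
  by_contra! hne
  refine hirr ⟨V, Submodule.one_le_finrank_iff.mpr hne.1,
    by simpa using Submodule.finrank_lt hne.2, fun i => ?_⟩
  have hinj : Function.Injective (Matrix.toEuclideanLin (A i)) := by
    rw [← Matrix.coe_toEuclideanCLM_eq_toEuclideanLin]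
    exact (ContinuousLinearMap.isUnit_iff_bijective.mp ((hA i).map Matrix.toEuclideanCLM)).1
  exact Submodule.eq_of_le_of_finrank_eq (Submodule.map_le_iff_le_comap.mpr (hV i))
    (Submodule.equivMapOfInjective _ hinj V).finrank_eq.symm

end Matrix

/-- **Barabanov's theorem** (the one-step specialization of Theorem 5.4 of
Bochi–Garibaldi, "Extremal Norms for Fiber-Bunched Cocycles"): an irreducible tuple
`A₀, …, A_{N−1}` of invertible matrices with joint spectral radius `ρ` admits a
Barabanov norm: `max_i |||Aᵢ u||| = ρ·|||u|||` for all `u`. -/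
theorem barabanov (d N : ℕ) (hd : 1 ≤ d) (hN : 1 ≤ N)
    (A : Fin N → Matrix (Fin d) (Fin d) ℝ) (hA : ∀ i, IsUnit (A i))
    (hirr : ¬ ∃ V : Submodule ℝ (EuclideanSpace ℝ (Fin d)),
      0 < Module.finrank ℝ V ∧ Module.finrank ℝ V < d ∧
      ∀ i, V.map (Matrix.toEuclideanLin (A i)) = V)
    (ρ : ℝ)
    (hρ : Filter.Tendsto
      (fun n : ℕ => (sSup {r : ℝ | ∃ w : Fin n → Fin N,
          r = matNorm ((List.ofFn fun i => A (w i)).prod)}) ^ ((1 : ℝ) / n))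
      Filter.atTop (nhds ρ)) :
    ∃ Nrm : (Fin d → ℝ) → ℝ,
      (∀ u v, Nrm (u + v) ≤ Nrm u + Nrm v) ∧
      (∀ (c : ℝ) (u : Fin d → ℝ), Nrm (c • u) = |c| * Nrm u) ∧
      (∀ u, u ≠ 0 → 0 < Nrm u) ∧
      ∀ u, (⨆ i : Fin N, Nrm ((A i).mulVec u)) = ρ * Nrm u := by
  have : Nonempty (Fin d) := ⟨⟨0, hd⟩⟩
  have : Nonempty (Fin N) := ⟨⟨0, hN⟩⟩
  obtain ⟨Q, hpos, hQ⟩ := barabanov_general (isIrreducibleTuple_toEuclideanCLM hA hirr)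
    (hρ.congr fun n => by rw [maxWordNorm_toEuclideanCLM])
  exact ⟨fun u => Q (WithLp.toLp 2 u), fun u v => map_add_le_add Q _ _,
    fun c u => map_smul_eq_mul Q c _, fun u hu => hpos _ (by simpa), fun u => hQ _⟩
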